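/- Let 0 < ρ < 1 and let f ∈ L¹([0,1]) have the 2nd level fractional derivative of order ρ and type (ν₁,ν₂) = (0,1) (i.e. J^{1−ρ} f ∈ AC([0,1]) and J^{1}(d/dt)J^{1−ρ} f ∈ AC([0,1])). Then the 2nd level fractional derivative coincides with the Riemann–Liouville fractional derivative: (2LD^{ρ,(0,1)} f)(t) = (RLD^ρ f)(t). -/

import Mathlib

open MeasureTheory Set Real Filter

/-- Riemann-Liouville fractional integral of order `ρ` on `[0,1]` (with `J⁰` the identity). -/
noncomputable def J (ρ : ℝ) (f : ℝ → ℝ) : ℝ → ℝ :=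
  if ρ = 0 then f else
    fun t => (1 / Real.Gamma ρ) * ∫ τ in (0:ℝ)..t, (t - τ) ^ (ρ - 1) * f τ

/-- Riemann-Liouville fractional derivative of order `ρ`. -/
noncomputable def RLD (ρ : ℝ) (f : ℝ → ℝ) : ℝ → ℝ :=
  fun t => deriv (J (1 - ρ) f) t

/-- `f ∈ L¹([0,1])`. -/
def MemL1 (f : ℝ → ℝ) : Prop := MeasureTheory.IntegrableOn f (Set.Icc 0 1)

/-- `f` is absolutely continuous on `[0,1]`: it is an integral of an `L¹` function. -/
def AC01 (f : ℝ → ℝ) : Prop :=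
  ∃ g : ℝ → ℝ, MeasureTheory.IntegrableOn g (Set.Icc 0 1) ∧
    ∀ t ∈ Set.Icc (0:ℝ) 1, f t = f 0 + ∫ τ in (0:ℝ)..t, g τ

/-- The 2nd level fractional derivative of order `ρ` and type `(ν₁, ν₂)`. -/
noncomputable def LFD2 (ρ ν₁ ν₂ : ℝ) (f : ℝ → ℝ) : ℝ → ℝ :=
  J ν₁ (deriv (J ν₂ (deriv (J (2 - ρ - ν₁ - ν₂) f))))

/-!
Since `J 1` is integration from `0`, the inner factor `(d/dt) J¹` in the derivative of type `(0, 1)`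
is the identity almost everywhere on integrable functions, by the Lebesgue differentiation theorem.
It acts there on `(d/dt) J^{1-ρ} f`, which is integrable because `J^{1-ρ} f` is absolutely
continuous.
-/

theorem ae_deriv_eq_of_eqOn_const_add_integral {E : Type*} [NormedAddCommGroup E]
    [NormedSpace ℝ E] [CompleteSpace E] {a b : ℝ} {F g : ℝ → E} {c : E}
    (hg : IntegrableOn g (Icc a b)) (hF : EqOn F (fun t ↦ c + ∫ τ in a..t, g τ) (Ioo a b)) :
    deriv F =ᵐ[volume.restrict (Icc a b)] g := by
  rw [← restrict_Ioo_eq_restrict_Icc]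
  refine (ae_restrict_iff' measurableSet_Ioo).2 ?_
  rcases le_total a b with hab | hba
  · have hg' : IntervalIntegrable g volume a b :=
      (intervalIntegrable_iff_integrableOn_Icc_of_le hab).2 hg
    filter_upwards [hg'.ae_hasDerivAt_integral] with t hderiv ht
    have htab : t ∈ uIcc a b := Icc_subset_uIcc (Ioo_subset_Icc_self ht)
    rw [hF.deriv isOpen_Ioo ht]
    exact ((hderiv htab a left_mem_uIcc).const_add c).deriv
  · simp [Ioo_eq_empty_of_le hba]

theorem AC01.memL1_deriv {F : ℝ → ℝ} (hF : AC01 F) : MemL1 (deriv F) := by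
  obtain ⟨g, hg, hFg⟩ := hF
  have hderiv : deriv F =ᵐ[volume.restrict (Icc 0 1)] g :=
    ae_deriv_eq_of_eqOn_const_add_integral hg fun t ht ↦ hFg t (Ioo_subset_Icc_self ht)
  exact hg.congr_fun_ae hderiv.symm

theorem J_zero (f : ℝ → ℝ) : J 0 f = f := if_pos rfl

theorem J_one (f : ℝ → ℝ) : J 1 f = fun t ↦ ∫ τ in (0 : ℝ)..t, f τ := by
  simp [J]

theorem MemL1.ae_deriv_J_one_eq {f : ℝ → ℝ} (hf : MemL1 f) :
    deriv (J 1 f) =ᵐ[volume.restrict (Icc 0 1)] f :=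
  ae_deriv_eq_of_eqOn_const_add_integral (c := 0) hf fun t _ ↦ by simp only [J_one, zero_add]

theorem LFD2_zero_one (ρ : ℝ) (f : ℝ → ℝ) : LFD2 ρ 0 1 f = deriv (J 1 (RLD ρ f)) := by
  have horder : 2 - ρ - 0 - 1 = 1 - ρ := by ring
  rw [LFD2, J_zero, horder]
  rfl

theorem stmt_9_general {ρ : ℝ} (_hρ : ρ ≤ 1) {f : ℝ → ℝ} (hf : AC01 (J (1 - ρ) f)) :
    LFD2 ρ 0 1 f =ᵐ[volume.restrict (Icc 0 1)] RLD ρ f := by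
  have hRLD : MemL1 (RLD ρ f) := hf.memL1_deriv
  rw [LFD2_zero_one]
  exact hRLD.ae_deriv_J_one_eq

/-- For type `(ν₁,ν₂) = (0,1)`, the 2nd level derivative is the RL derivative. -/
theorem stmt_9 (ρ : ℝ) (hρ0 : 0 < ρ) (hρ1 : ρ < 1) (f : ℝ → ℝ) (hf : MemL1 f)
    (hAC1 : AC01 (J (1 - ρ) f)) (hAC2 : AC01 (J 1 (deriv (J (1 - ρ) f)))) :
    ∀ᵐ t ∂(volume.restrict (Set.Icc (0:ℝ) 1)), LFD2 ρ 0 1 f t = RLD ρ f t :=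
  stmt_9_general hρ1.le hAC1
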